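/- Let h(n) denote the number of permutations of length n avoiding 4213, 2413 and 2143, and let d(n) denote the number of permutations of length n avoiding 4213 and 2143. Then both classes have growth rate 5: h(n)^{1/n} → 5 and d(n)^{1/n} → 5 as n → ∞. -/

import Mathlib

open Filter Topology PowerSeries

/-- `σ` contains the pattern `π`. -/
def PatternContains {n k : ℕ} (σ : Equiv.Perm (Fin n)) (π : Fin k → Fin k) : Prop :=
  ∃ f : Fin k → Fin n, StrictMono f ∧ ∀ a b : Fin k, π a < π b ↔ σ (f a) < σ (f b)

/-- `σ` avoids the pattern `π`. -/
def PatternAvoids {n k : ℕ} (σ : Equiv.Perm (Fin n)) (π : Fin k → Fin k) : Prop :=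
  ¬ PatternContains σ π

/-- The pattern 4213 (zero-indexed values). -/
def p4213 : Fin 4 → Fin 4 := ![3, 1, 0, 2]

/-- The pattern 2413 (zero-indexed values). -/
def p2413 : Fin 4 → Fin 4 := ![1, 3, 0, 2]

/-- The pattern 2143 (zero-indexed values). -/
def p2143 : Fin 4 → Fin 4 := ![1, 0, 3, 2]

/-- The pattern 213 (zero-indexed values). -/
def p213 : Fin 3 → Fin 3 := ![1, 0, 2]

/-- `σ` avoids 4213, 2413 and 2143. -/
def AvoidsH {n : ℕ} (σ : Equiv.Perm (Fin n)) : Prop :=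
  PatternAvoids σ p4213 ∧ PatternAvoids σ p2413 ∧ PatternAvoids σ p2143

/-- `σ` avoids 4213 and 2143. -/
def AvoidsD {n : ℕ} (σ : Equiv.Perm (Fin n)) : Prop :=
  PatternAvoids σ p4213 ∧ PatternAvoids σ p2143

/-- An H-gridding of `σ`: a value cutoff `k ∈ {0,…,n}` such that the subsequence of
entries with (1-based) values `> k` is increasing and the subsequence of entries with
values `≤ k` avoids 213. -/
def HGridding {n : ℕ} (σ : Equiv.Perm (Fin n)) (k : ℕ) : Prop :=
  k ≤ n ∧
  (∀ i j : Fin n, i < j → k < (σ i : ℕ) + 1 → k < (σ j : ℕ) + 1 → σ i < σ j) ∧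
  ¬ ∃ f : Fin 3 → Fin n, StrictMono f ∧ (∀ a, (σ (f a) : ℕ) + 1 ≤ k) ∧
      (∀ a b : Fin 3, p213 a < p213 b ↔ σ (f a) < σ (f b))

/-- A G-gridding of `σ`: a pair `(j, k)` with `0 ≤ j, k ≤ n` such that (i) the first `j`
entries have values `≤ k` and are increasing, (ii) the subsequence of entries at
(1-based) positions `> j` with values `> k` is increasing, and (iii) the subsequence of
entries at positions `> j` with values `≤ k` avoids 213. -/
def GGridding {n : ℕ} (σ : Equiv.Perm (Fin n)) (j k : ℕ) : Prop :=
  j ≤ n ∧ k ≤ n ∧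
  (∀ i : Fin n, (i : ℕ) < j → (σ i : ℕ) + 1 ≤ k) ∧
  (∀ i₁ i₂ : Fin n, i₁ < i₂ → (i₂ : ℕ) < j → σ i₁ < σ i₂) ∧
  (∀ i₁ i₂ : Fin n, i₁ < i₂ → j ≤ (i₁ : ℕ) → k < (σ i₁ : ℕ) + 1 → k < (σ i₂ : ℕ) + 1 →
      σ i₁ < σ i₂) ∧
  ¬ ∃ f : Fin 3 → Fin n, StrictMono f ∧ (∀ a, j ≤ ((f a) : ℕ) ∧ (σ (f a) : ℕ) + 1 ≤ k) ∧
      (∀ a b : Fin 3, p213 a < p213 b ↔ σ (f a) < σ (f b))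

/-- The number of permutations of length `n` avoiding 4213, 2413 and 2143. -/
noncomputable def hCount (n : ℕ) : ℕ :=
  Nat.card {σ : Equiv.Perm (Fin n) // AvoidsH σ}

/-- The number of permutations of length `n` avoiding 4213 and 2143. -/
noncomputable def dCount (n : ℕ) : ℕ :=
  Nat.card {σ : Equiv.Perm (Fin n) // AvoidsD σ}

/-- The minimal number of top points over all H-griddings of `σ`. -/
noncomputable def topPts {n : ℕ} (σ : Equiv.Perm (Fin n)) : ℕ :=
  n - sSup {k | HGridding σ k}

/-- The minimal number of left points over all G-griddings of `σ`. -/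
noncomputable def leftPts {n : ℕ} (σ : Equiv.Perm (Fin n)) : ℕ :=
  sInf {j | ∃ k, GGridding σ j k}

/-!
*Upper bound.* Let `t` be maximal such that the `t` largest entries of a permutation avoiding 4213
and 2143 increase. Deleting the smaller entries from the bottom up reduces the permutation to the
identity of length `t`, so conversely it arises from that identity by inserting new minima. The
gaps available for a new minimum are of two kinds: *tail* sites, to the right of which only the
`t` largest entries occur, and *inner* sites. After an insertion at `s > 0`, no inner site lies to
the right of `s` and no tail site to its left; after an insertion at `0`, at most two inner sites
remain. So the inner sites after an insertion can be counted by the available sites up to `s`, and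
the weight `5 ^ tail * (5 / 3) ^ inner`, summed over all insertions into one permutation, grows by
a factor of at most 5. This gives at most `5 ^ (n + 1)` permutations for each `t ≤ n`.

*Lower bound.* Placing an increasing sequence above a 213-avoider that occupies `k` chosen
positions yields a permutation avoiding 4213, 2413 and 2143. Hence
`h(n) ≥ choose n k * catalan k` for every `k`. Up to polynomial factors, the Catalan numbers are
`4 ^ k` and the `n + 1` values of `k` together give `∑ k, choose n k * 4 ^ k = 5 ^ n`.
-/

open scoped Finset

/-! ### Pattern containment -/

section Patterns

variable {n m k : ℕ}

lemma PatternContains.trans {σ : Equiv.Perm (Fin n)} {π : Equiv.Perm (Fin m)}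
    {ρ : Fin k → Fin k} (hσ : PatternContains σ π) (hπ : PatternContains π ρ) :
    PatternContains σ ρ := by
  obtain ⟨f, hf, hσ⟩ := hσ
  obtain ⟨g, hg, hπ⟩ := hπ
  exact ⟨f ∘ g, hf.comp hg, fun a b => (hπ a b).trans (hσ _ _)⟩

lemma patternContains_iff_strictMono {σ : Equiv.Perm (Fin n)} {π π' : Fin k → Fin k}
    (hl : Function.LeftInverse π' π) (hr : Function.RightInverse π' π) :
    PatternContains σ π ↔ ∃ f : Fin k → Fin n, StrictMono f ∧ StrictMono (σ ∘ f ∘ π') := by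
  refine exists_congr fun f => and_congr_right fun _ => ⟨fun h a b hab => ?_, fun h a b => ?_⟩
  · exact (h _ _).1 (by rwa [hr a, hr b])
  · simpa [hl a, hl b] using (h.lt_iff_lt (a := π a) (b := π b)).symm

variable {σ : Equiv.Perm (Fin n)}

lemma patternContains_p213 :
    PatternContains σ p213 ↔ ∃ i j k, i < j ∧ j < k ∧ σ j < σ i ∧ σ i < σ k := by
  rw [patternContains_iff_strictMono (π' := ![1, 0, 2]) (by decide) (by decide),
    ← FinVec.exists_iff]
  simp [FinVec.Exists, Fin.strictMono_iff_lt_succ, Fin.forall_fin_succ, and_assoc]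

lemma patternContains_p4213 :
    PatternContains σ p4213 ↔
      ∃ i j k l, i < j ∧ j < k ∧ k < l ∧ σ k < σ j ∧ σ j < σ l ∧ σ l < σ i := by
  rw [patternContains_iff_strictMono (π' := ![2, 1, 3, 0]) (by decide) (by decide),
    ← FinVec.exists_iff]
  simp [FinVec.Exists, Fin.strictMono_iff_lt_succ, Fin.forall_fin_succ, and_assoc]

lemma patternContains_p2413 :
    PatternContains σ p2413 ↔
      ∃ i j k l, i < j ∧ j < k ∧ k < l ∧ σ k < σ i ∧ σ i < σ l ∧ σ l < σ j := by
  rw [patternContains_iff_strictMono (π' := ![2, 0, 3, 1]) (by decide) (by decide),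
    ← FinVec.exists_iff]
  simp [FinVec.Exists, Fin.strictMono_iff_lt_succ, Fin.forall_fin_succ, and_assoc]

lemma patternContains_p2143 :
    PatternContains σ p2143 ↔
      ∃ i j k l, i < j ∧ j < k ∧ k < l ∧ σ j < σ i ∧ σ i < σ l ∧ σ l < σ k := by
  rw [patternContains_iff_strictMono (π' := ![1, 0, 3, 2]) (by decide) (by decide),
    ← FinVec.exists_iff]
  simp [FinVec.Exists, Fin.strictMono_iff_lt_succ, Fin.forall_fin_succ, and_assoc]

end Patterns

/-! ### Inserting a new minimum -/

section InsertMin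

variable {n : ℕ}

/-- The permutation obtained from `π` by inserting a new minimal value at position `s`. -/
def insertMin (s : Fin (n + 1)) (π : Equiv.Perm (Fin n)) : Equiv.Perm (Fin (n + 1)) :=
  (finSuccEquiv' s).trans ((Equiv.optionCongr π).trans (finSuccEquiv' 0).symm)

@[simp]
lemma insertMin_self (s : Fin (n + 1)) (π : Equiv.Perm (Fin n)) : insertMin s π s = 0 := by
  simp [insertMin]

@[simp]
lemma insertMin_succAbove (s : Fin (n + 1)) (π : Equiv.Perm (Fin n)) (i : Fin n) :
    insertMin s π (s.succAbove i) = (π i).succ := by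
  simp [insertMin]

lemma insertMin_self_le (s : Fin (n + 1)) (π : Equiv.Perm (Fin n)) (i : Fin (n + 1)) :
    insertMin s π s ≤ insertMin s π i := by
  simp

lemma patternContains_insertMin (s : Fin (n + 1)) (π : Equiv.Perm (Fin n)) :
    PatternContains (insertMin s π) π :=
  ⟨s.succAbove, Fin.strictMono_succAbove s, fun a b => by simp⟩

lemma insertMin_injective :
    Function.Injective fun p : Fin (n + 1) × Equiv.Perm (Fin n) => insertMin p.1 p.2 := by
  rintro ⟨s, π⟩ ⟨u, ρ⟩ (h : insertMin s π = insertMin u ρ)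
  obtain rfl : s = u := (insertMin u ρ).injective <| by rw [insertMin_self, ← h, insertMin_self]
  have hπρ : π = ρ := Equiv.ext fun i => by
    simpa using DFunLike.congr_fun h (s.succAbove i)
  rw [hπρ]

lemma insertMin_bijective :
    Function.Bijective fun p : Fin (n + 1) × Equiv.Perm (Fin n) => insertMin p.1 p.2 := by
  rw [Fintype.bijective_iff_injective_and_card]
  exact ⟨insertMin_injective, by simp [Fintype.card_perm, Nat.factorial_succ]⟩

lemma sum_insertMin {M : Type*} [AddCommMonoid M] (f : Equiv.Perm (Fin (n + 1)) → M) :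
    ∑ π, ∑ s, f (insertMin s π) = ∑ σ, f σ := by
  rw [← Fintype.sum_prod_type_right fun p : Fin (n + 1) × Equiv.Perm (Fin n) =>
    f (insertMin p.1 p.2)]
  exact insertMin_bijective.sum_comp f

lemma val_succAbove (s : Fin (n + 1)) (i : Fin n) :
    (s.succAbove i : ℕ) = if (i : ℕ) < s then (i : ℕ) else i + 1 := by
  simp only [Fin.succAbove, Fin.lt_def, Fin.val_castSucc, apply_ite Fin.val, Fin.val_succ]

variable {s : Fin (n + 1)} {π : Equiv.Perm (Fin n)}

lemma AvoidsD.of_insertMin (h : AvoidsD (insertMin s π)) : AvoidsD π :=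
  ⟨fun hπ => h.1 ((patternContains_insertMin s π).trans hπ),
    fun hπ => h.2 ((patternContains_insertMin s π).trans hπ)⟩

lemma PatternAvoids.insertMin_p213 (hπ : PatternAvoids π p213)
    (hs : ∀ i j : Fin n, (i : ℕ) < s → (s : ℕ) ≤ j → π j < π i) :
    PatternAvoids (insertMin s π) p213 := by
  rw [PatternAvoids, patternContains_p213] at hπ ⊢
  rintro ⟨i, j, k, hij, hjk, hji, hik⟩
  have his : i ≠ s := by
    rintro rfl
    simp at hji
  have hks : k ≠ s := by
    rintro rfl
    simp at hik
  obtain ⟨i, rfl⟩ := Fin.exists_succAbove_eq his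
  obtain ⟨k, rfl⟩ := Fin.exists_succAbove_eq hks
  rw [insertMin_succAbove, insertMin_succAbove, Fin.succ_lt_succ_iff] at hik
  by_cases hjs : j = s
  · subst hjs
    rw [Fin.lt_def, val_succAbove] at hij hjk
    exact hik.not_gt (hs i k (by grind) (by grind))
  · obtain ⟨j, rfl⟩ := Fin.exists_succAbove_eq hjs
    exact hπ ⟨i, j, k, by simpa using hij, by simpa using hjk, by simpa using hji, hik⟩

end InsertMin
/-! ### Sites for a new minimum -/

/-- A site `s` (the gap before position `s`) of `π` at which inserting a new minimum creates
neither a 4213 nor a 2143, the new entry playing the role of the 1. -/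
structure MinSite {n : ℕ} (π : Equiv.Perm (Fin n)) (s : ℕ) : Prop where
  not_312 : ∀ ⦃a b c : Fin n⦄, a < b → (b : ℕ) < s → s ≤ c → π b < π c → ¬ π c < π a
  not_132 : ∀ ⦃a b c : Fin n⦄, (a : ℕ) < s → s ≤ b → b < c → π a < π c → ¬ π c < π b

/-- The positions of the `t` largest entries of `σ`. -/
def topPositions {n : ℕ} (t : ℕ) (σ : Equiv.Perm (Fin n)) : Set (Fin n) :=
  {i | n ≤ σ i + t}

/-- `σ` avoids 4213 and 2143, and `t` is the largest number for which its `t` largest entries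
increase. The class avoiding 4213 and 2143 is counted separately for each `t`. -/
structure TopIncreasing {n : ℕ} (t : ℕ) (σ : Equiv.Perm (Fin n)) : Prop where
  avoidsD : AvoidsD σ
  strictMonoOn : StrictMonoOn σ (topPositions t σ)
  not_strictMonoOn : t < n → ¬ StrictMonoOn σ (topPositions (t + 1) σ)

open Classical in
/-- The available sites of `π`. -/
noncomputable def minSites {n : ℕ} (π : Equiv.Perm (Fin n)) : Finset ℕ :=
  {s ∈ Finset.range (n + 1) | MinSite π s}

open Classical in
/-- The sites of `π` to the right of which only the `t` largest values occur. -/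
noncomputable def tailSites {n : ℕ} (t : ℕ) (π : Equiv.Perm (Fin n)) : Finset ℕ :=
  {s ∈ Finset.range (n + 1) | ∀ i : Fin n, s ≤ i → i ∈ topPositions t π}

/-- The available sites of `π` that are not tail sites. -/
noncomputable def innerSites {n : ℕ} (t : ℕ) (π : Equiv.Perm (Fin n)) : Finset ℕ :=
  minSites π \ tailSites t π

section Sites

variable {n t u v : ℕ} {σ : Equiv.Perm (Fin n)}

lemma mem_minSites : u ∈ minSites σ ↔ u < n + 1 ∧ MinSite σ u := by
  simp [minSites]

lemma mem_tailSites :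
    u ∈ tailSites t σ ↔ u < n + 1 ∧ ∀ i : Fin n, u ≤ i → i ∈ topPositions t σ := by
  simp [tailSites]

lemma minSite_of_mem_innerSites (hu : u ∈ innerSites t σ) : MinSite σ u :=
  (mem_minSites.1 (Finset.mem_sdiff.1 hu).1).2

lemma exists_notMem_topPositions_of_mem_innerSites (hu : u ∈ innerSites t σ) :
    ∃ c : Fin n, u ≤ c ∧ c ∉ topPositions t σ := by
  obtain ⟨hmin, htail⟩ := Finset.mem_sdiff.1 hu
  simpa [mem_tailSites, (mem_minSites.1 hmin).1] using htail

lemma mem_topPositions {i : Fin n} : i ∈ topPositions t σ ↔ n ≤ σ i + t :=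
  Iff.rfl

lemma lt_of_notMem_topPositions {i j : Fin n} (hi : i ∉ topPositions t σ)
    (hj : j ∈ topPositions t σ) : σ i < σ j := by
  rw [mem_topPositions] at hi hj
  omega

lemma exists_topIncreasing (h : AvoidsD σ) : ∃ t ≤ n, TopIncreasing t σ := by
  classical
  let P : ℕ → Prop := fun t => StrictMonoOn σ (topPositions t σ)
  have hP : P (Nat.findGreatest P n) := Nat.findGreatest_spec (Nat.zero_le n) fun i hi => by
    rw [mem_topPositions] at hi
    omega
  exact ⟨Nat.findGreatest P n, Nat.findGreatest_le n, h, hP,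
    Nat.findGreatest_is_greatest (Nat.lt_succ_self _)⟩

namespace TopIncreasing

lemma tailSites_subset_minSites (hσ : TopIncreasing t σ) : tailSites t σ ⊆ minSites σ := by
  intro u hu
  obtain ⟨hun, htop⟩ := mem_tailSites.1 hu
  refine mem_minSites.2 ⟨hun, fun a b c hab hb hc _ hca => ?_, fun a b c _ hb hbc _ => ?_⟩
  · have ha : a ∈ topPositions t σ := by
      by_contra ha
      exact hca.not_gt (lt_of_notMem_topPositions ha (htop c hc))
    exact hca.not_gt (hσ.strictMonoOn ha (htop c hc) (by omega))
  · exact (hσ.strictMonoOn (htop b hb) (htop c (by omega)) hbc).not_gt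

lemma exists_largest_notMem_topPositions (hσ : TopIncreasing t σ) {c : Fin n}
    (hc : c ∉ topPositions t σ) :
    ∃ a z : Fin n, a < z ∧ a ∈ topPositions t σ ∧ z ∉ topPositions t σ ∧ σ c ≤ σ z := by
  have hdescent := hσ.not_strictMonoOn (by rw [mem_topPositions] at hc; omega)
  simp only [StrictMonoOn, not_forall, not_lt] at hdescent
  obtain ⟨a, ha, z, hz, haz, hle⟩ := hdescent
  have hlt : σ z < σ a := lt_of_le_of_ne hle fun h => haz.ne' (σ.injective h)
  have hz' : z ∉ topPositions t σ := fun hz' => by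
    have ha' : a ∈ topPositions t σ := by
      by_contra ha'
      exact hlt.not_gt (lt_of_notMem_topPositions ha' hz')
    exact hlt.not_gt (hσ.strictMonoOn ha' hz' haz)
  rw [mem_topPositions] at ha hz hz' hc
  exact ⟨a, z, haz, mem_topPositions.2 (by omega), hz', by omega⟩

end TopIncreasing

section Minimum

variable {s : Fin n}

lemma apply_lt_apply_of_forall_le (hs : ∀ i, σ s ≤ σ i) {i : Fin n} (hi : i ≠ s) : σ s < σ i :=
  lt_of_le_of_ne (hs i) fun h => hi (σ.injective h.symm)

lemma MinSite.apply_lt_apply (hs : ∀ i, σ s ≤ σ i) (h : MinSite σ u) (hsu : s < u)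
    {a c : Fin n} (ha : a < s) (hc : u ≤ c) : σ a < σ c := by
  have hle := h.not_312 ha hsu hc (apply_lt_apply_of_forall_le hs (by omega))
  exact lt_of_le_of_ne (not_lt.1 hle) fun hac => by have := σ.injective hac; omega

lemma MinSite.strictMonoOn (hs : ∀ i, σ s ≤ σ i) (h : MinSite σ u) (hsu : s < u) :
    StrictMonoOn σ {i | u ≤ i} := by
  intro b (hb : u ≤ b) c (hc : u ≤ c) hbc
  have hle := h.not_132 hsu hb hbc (apply_lt_apply_of_forall_le hs (by omega))
  exact lt_of_le_of_ne (not_lt.1 hle) fun h => hbc.ne (σ.injective h)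

lemma TopIncreasing.le_of_mem_innerSites (hs : ∀ i, σ s ≤ σ i) (hσ : TopIncreasing t σ)
    (hs0 : 0 < (s : ℕ)) (hu : u ∈ innerSites t σ) : u ≤ s := by
  by_contra! hsu
  obtain ⟨c, huc, hc⟩ := exists_notMem_topPositions_of_mem_innerSites hu
  have hleft : ∀ a < s, σ a < σ c := fun a ha =>
    (minSite_of_mem_innerSites hu).apply_lt_apply hs hsu ha huc
  obtain ⟨a, z, haz, ha, hz, hcz⟩ := hσ.exists_largest_notMem_topPositions hc
  have hca : σ c < σ a := lt_of_notMem_topPositions hc ha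
  have hsa : s < a := by
    refine lt_of_le_of_ne (not_lt.1 fun has => (hleft a has).not_gt hca) ?_
    rintro rfl
    exact (hs c).not_gt hca
  let o : Fin n := ⟨0, by omega⟩
  have hos : o < s := hs0
  exact hσ.avoidsD.2 <| patternContains_p2143.2 ⟨o, s, a, z, hos, hsa, haz,
    apply_lt_apply_of_forall_le hs hos.ne, (hleft o hos).trans_le hcz,
    lt_of_notMem_topPositions hz ha⟩

lemma TopIncreasing.le_of_mem_innerSites_of_lt (hs : ∀ i, σ s ≤ σ i)
    (hσ : TopIncreasing t σ) (hu : u ∈ innerSites t σ) (hv : v ∈ innerSites t σ) (hsu : s < u) :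
    v ≤ u := by
  by_contra! huv
  obtain ⟨c, hvc, hc⟩ := exists_notMem_topPositions_of_mem_innerSites hv
  obtain ⟨a, z, haz, ha, hz, -⟩ := hσ.exists_largest_notMem_topPositions hc
  have hright : StrictMonoOn σ {i | u ≤ i} :=
    (minSite_of_mem_innerSites hu).strictMonoOn hs hsu
  have hau : a < u := by
    by_contra! hua
    exact (hright hua (hua.trans haz.le) haz).not_gt (lt_of_notMem_topPositions hz ha)
  let b : Fin n := ⟨u, by omega⟩
  have hbc : σ b < σ c := hright (le_refl u) (huv.le.trans hvc) (Fin.lt_def.2 (huv.trans_le hvc))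
  exact (minSite_of_mem_innerSites hv).not_312 (a := a) (b := b) hau huv hvc hbc
    (lt_of_notMem_topPositions hc ha)

end Minimum

end Sites
/-! ### The effect of an insertion on the sites -/

section Insertion

variable {n t u : ℕ} {s : Fin (n + 1)} {π : Equiv.Perm (Fin n)}

lemma topPositions_insertMin (ht : t ≤ n) :
    topPositions t (insertMin s π) = s.succAbove '' topPositions t π := by
  ext i
  rcases eq_or_ne i s with rfl | hi
  · simp [mem_topPositions, Fin.succAbove_ne, ht]
  · obtain ⟨j, rfl⟩ := Fin.exists_succAbove_eq hi
    simp [mem_topPositions, add_right_comm]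

lemma strictMonoOn_topPositions_insertMin (ht : t ≤ n) :
    StrictMonoOn (insertMin s π) (topPositions t (insertMin s π)) ↔
      StrictMonoOn π (topPositions t π) := by
  simp [StrictMonoOn, topPositions_insertMin ht]

lemma TopIncreasing.of_insertMin (ht : t ≤ n) (h : TopIncreasing t (insertMin s π)) :
    TopIncreasing t π where
  avoidsD := h.avoidsD.of_insertMin
  strictMonoOn := (strictMonoOn_topPositions_insertMin ht).1 h.strictMonoOn
  not_strictMonoOn htn hinc :=
    h.not_strictMonoOn (by omega) ((strictMonoOn_topPositions_insertMin htn).2 hinc)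

lemma AvoidsD.minSite (h : AvoidsD (insertMin s π)) : MinSite π s where
  not_312 a b c hab hb hc hbc hca := h.1 <| patternContains_p4213.2
    ⟨s.succAbove a, s.succAbove b, s, s.succAbove c, by simpa,
      Fin.succAbove_lt_iff_castSucc_lt _ _ |>.2 hb, Fin.lt_succAbove_iff_le_castSucc _ _ |>.2 hc,
      by simp, by simpa, by simpa⟩
  not_132 a b c ha hb hbc hac hcb := h.2 <| patternContains_p2143.2
    ⟨s.succAbove a, s, s.succAbove b, s.succAbove c, Fin.succAbove_lt_iff_castSucc_lt _ _ |>.2 ha,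
      Fin.lt_succAbove_iff_le_castSucc _ _ |>.2 hb, by simpa, by simp, by simpa, by simpa⟩

lemma MinSite.of_insertMin (h : MinSite (insertMin s π) u) (hu : u ≤ s) : MinSite π u where
  not_312 a b c hab hb hc hbc hca :=
    h.not_312 (a := s.succAbove a) (b := s.succAbove b) (c := s.succAbove c) (by simpa)
      (by grind [val_succAbove]) (by grind [val_succAbove]) (by simpa) (by simpa)
  not_132 a b c ha hb hbc hac hcb :=
    h.not_132 (a := s.succAbove a) (b := s.succAbove b) (c := s.succAbove c)
      (by grind [val_succAbove]) (by grind [val_succAbove]) (by simpa) (by simpa) (by simpa)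

lemma mem_tailSites_of_insertMin (ht : t ≤ n) (hu : u ∈ tailSites t (insertMin s π)) :
    s < u ∧ u - 1 ∈ tailSites t π := by
  rw [mem_tailSites, topPositions_insertMin ht] at hu
  obtain ⟨hun, htop⟩ := hu
  have hsu : s < u := by
    by_contra! hus
    obtain ⟨i, -, hi⟩ := htop s hus
    exact Fin.succAbove_ne s i hi
  refine ⟨hsu, mem_tailSites.2 ⟨by omega, fun i hi => ?_⟩⟩
  simpa [Fin.succAbove_right_injective.mem_set_image] using
    htop (s.succAbove i) (by grind [val_succAbove])

lemma card_tailSites_insertMin_le (ht : t ≤ n) :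
    #(tailSites t (insertMin s π)) ≤ #{x ∈ tailSites t π | ↑s ≤ x} := by
  refine Finset.card_le_card_of_injOn (· - 1) (fun u hu => ?_) fun u hu v hv huv => ?_
  · obtain ⟨hsu, hu⟩ := mem_tailSites_of_insertMin ht hu
    exact Finset.mem_filter.2 ⟨hu, Nat.le_sub_one_of_lt hsu⟩
  · have hsu := (mem_tailSites_of_insertMin ht hu).1
    have hsv := (mem_tailSites_of_insertMin ht hv).1
    grind

lemma card_innerSites_insertMin_le_of_pos (hσ : TopIncreasing t (insertMin s π))
    (hs : 0 < (s : ℕ)) : #(innerSites t (insertMin s π)) ≤ #{x ∈ minSites π | x ≤ (s : ℕ)} := by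
  refine Finset.card_le_card fun u hu => ?_
  have hus := hσ.le_of_mem_innerSites (insertMin_self_le s π) hs hu
  exact Finset.mem_filter.2
    ⟨mem_minSites.2 ⟨by omega, (minSite_of_mem_innerSites hu).of_insertMin hus⟩, hus⟩

lemma card_innerSites_insertMin_zero_le (hσ : TopIncreasing t (insertMin 0 π)) :
    #(innerSites t (insertMin 0 π)) ≤ 2 := by
  have hle : ∀ u ∈ (innerSites t (insertMin 0 π)).erase 0,
      ∀ v ∈ (innerSites t (insertMin 0 π)).erase 0, v ≤ u := fun u hu v hv =>
    hσ.le_of_mem_innerSites_of_lt (insertMin_self_le 0 π) (Finset.mem_of_mem_erase hu)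
      (Finset.mem_of_mem_erase hv) (Nat.pos_of_ne_zero (Finset.ne_of_mem_erase hu))
  have hone : #((innerSites t (insertMin 0 π)).erase 0) ≤ 1 :=
    Finset.card_le_one.2 fun u hu v hv => (hle v hv u hu).antisymm (hle u hu v hv)
  have := Finset.pred_card_le_card_erase (s := innerSites t (insertMin 0 π)) (a := 0)
  omega

lemma card_innerSites_insertMin_le (hσ : TopIncreasing t (insertMin s π)) :
    #(innerSites t (insertMin s π)) ≤ max #{x ∈ minSites π | x ≤ (s : ℕ)} 2 := by
  rcases Nat.eq_zero_or_pos s with hs | hs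
  · obtain rfl : s = 0 := Fin.ext hs
    exact (card_innerSites_insertMin_zero_le hσ).trans (le_max_right _ _)
  · exact (card_innerSites_insertMin_le_of_pos hσ hs).trans (le_max_left _ _)

end Insertion

/-! ### The weight argument -/

lemma sum_card_filter_le_card_filter_ge {α M : Type*} [LinearOrder α] [AddCommMonoid M]
    (f : ℕ → ℕ → M) (S : Finset α) :
    ∑ s ∈ S, f #{x ∈ S | x ≤ s} #{x ∈ S | s ≤ x} =
      ∑ i ∈ Finset.range #S, f (i + 1) (#S - i) := by
  induction S using Finset.induction_on_max generalizing f with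
  | empty => simp
  | insert a S ha ih =>
    have haS : a ∉ S := fun h => lt_irrefl a (ha a h)
    have hmax : f #{x ∈ insert a S | x ≤ a} #{x ∈ insert a S | a ≤ x} = f (#S + 1) 1 := by
      rw [Finset.filter_true_of_mem (by simpa using fun x hx => (ha x hx).le),
        Finset.card_insert_of_notMem haS, Finset.filter_insert, if_pos le_rfl,
        Finset.filter_false_of_mem fun x hx => (ha x hx).not_ge]
      rfl
    have hrest : ∀ s ∈ S, f #{x ∈ insert a S | x ≤ s} #{x ∈ insert a S | s ≤ x} =
        f #{x ∈ S | x ≤ s} (#{x ∈ S | s ≤ x} + 1) := fun s hs => by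
      rw [Finset.filter_insert, if_neg (ha s hs).not_ge, Finset.filter_insert,
        if_pos (ha s hs).le, Finset.card_insert_of_notMem (by simp [haS])]
    rw [Finset.sum_insert haS, hmax, Finset.sum_congr rfl hrest,
      ih fun r c => f r (c + 1), Finset.card_insert_of_notMem haS, Finset.sum_range_succ,
      add_comm, Nat.add_sub_cancel_left]
    congr 1
    refine Finset.sum_congr rfl fun i hi => ?_
    rw [Nat.succ_sub (Finset.mem_range.1 hi).le]

/-- The weight of `π` in the upper bound. In general `x ^ a * y ^ b`, for `a` tail sites and `b`
inner sites, is `x ^ (t + 1)` at length `t` and grows by a factor of at most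
`x * y / (x - y) + y / (y - 1)` per insertion; `x = 5` and `y = 5 / 3` make this factor `x`. -/
noncomputable def siteWeight {n : ℕ} (t : ℕ) (π : Equiv.Perm (Fin n)) : ℝ :=
  5 ^ #(tailSites t π) * (5 / 3) ^ #(innerSites t π)

lemma sum_pow_min_mul_pow_succ_le (a b : ℕ) :
    ∑ i ∈ Finset.range (b + a), (5 : ℝ) ^ min a (b + a - i) * (5 / 3) ^ (i + 1) ≤
      5 * (5 ^ a * (5 / 3) ^ b) - 5 / 2 * 5 ^ a := by
  have hinner : ∑ i ∈ Finset.range b, (5 : ℝ) ^ min a (b + a - i) * (5 / 3) ^ (i + 1) =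
      5 / 2 * (5 ^ a * ((5 / 3) ^ b - 1)) := by
    have hgeom := geom_sum_eq (x := (5 / 3 : ℝ)) (by norm_num) b
    calc _ = ∑ i ∈ Finset.range b, (5 : ℝ) ^ a * (5 / 3) * (5 / 3) ^ i :=
          Finset.sum_congr rfl fun i hi => by
            rw [min_eq_left (by have := Finset.mem_range.1 hi; omega)]
            ring
      _ = 5 / 2 * (5 ^ a * ((5 / 3) ^ b - 1)) := by
          rw [← Finset.mul_sum, hgeom]
          ring
  have htail : ∑ i ∈ Finset.range a, (5 : ℝ) ^ min a (b + a - (b + i)) * (5 / 3) ^ (b + i + 1) =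
      5 / 2 * ((5 / 3) ^ b * (5 ^ a - (5 / 3) ^ a)) := by
    have hgeom := (Commute.all (5 / 3 : ℝ) 5).geom_sum₂ (by norm_num) a
    calc _ = ∑ i ∈ Finset.range a, (5 / 3 : ℝ) ^ b * (25 / 3) * ((5 / 3) ^ i * 5 ^ (a - 1 - i)) :=
          Finset.sum_congr rfl fun i hi => by
            have hia := Finset.mem_range.1 hi
            rw [show min a (b + a - (b + i)) = a - 1 - i + 1 by omega]
            ring
      _ = 5 / 2 * ((5 / 3) ^ b * (5 ^ a - (5 / 3) ^ a)) := by
          rw [← Finset.mul_sum, hgeom]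
          ring
  have hnonneg : (0 : ℝ) ≤ (5 / 3) ^ b * (5 / 3) ^ a := by positivity
  rw [Finset.sum_range_add, hinner, htail]
  linarith

lemma sum_pow_min_mul_pow_max_le (a b : ℕ) :
    ∑ i ∈ Finset.range (b + a), (5 : ℝ) ^ min a (b + a - i) * (5 / 3) ^ max (i + 1) 2 ≤
      5 * (5 ^ a * (5 / 3) ^ b) := by
  have hterm : ∀ i ∈ Finset.range (b + a),
      (5 : ℝ) ^ min a (b + a - i) * (5 / 3) ^ max (i + 1) 2 ≤
        5 ^ min a (b + a - i) * (5 / 3) ^ (i + 1) + if i = 0 then 10 / 9 * 5 ^ a else 0 := by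
    rintro (_ | i) -
    · have : (5 : ℝ) ^ min a (b + a) ≤ 5 ^ a := by gcongr <;> simp
      norm_num
      linarith
    · simp
  have hextra : (∑ i ∈ Finset.range (b + a), if i = 0 then (10 / 9 * 5 ^ a : ℝ) else 0) ≤
      10 / 9 * 5 ^ a := by
    rw [Finset.sum_ite_eq']
    split_ifs
    · rfl
    · positivity
  have hpos : (0 : ℝ) < 5 ^ a := by positivity
  calc _ ≤ _ := Finset.sum_le_sum hterm
    _ ≤ 5 * (5 ^ a * (5 / 3) ^ b) - 5 / 2 * 5 ^ a + 10 / 9 * 5 ^ a := by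
        rw [Finset.sum_add_distrib]
        exact add_le_add (sum_pow_min_mul_pow_succ_le a b) hextra
    _ ≤ 5 * (5 ^ a * (5 / 3) ^ b) := by linarith

section Weight

variable {n t : ℕ} {π : Equiv.Perm (Fin n)}

lemma one_le_siteWeight : 1 ≤ siteWeight t π :=
  one_le_mul_of_one_le_of_one_le (one_le_pow₀ (by norm_num)) (one_le_pow₀ (by norm_num))

lemma siteWeight_insertMin_le {s : Fin (n + 1)} (hπ : TopIncreasing t π)
    (hσ : TopIncreasing t (insertMin s π)) (ht : t ≤ n) :
    siteWeight t (insertMin s π) ≤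
      5 ^ min #(tailSites t π) #{x ∈ minSites π | ↑s ≤ x} *
        (5 / 3) ^ max #{x ∈ minSites π | x ≤ (s : ℕ)} 2 := by
  have htail : #(tailSites t (insertMin s π)) ≤
      min #(tailSites t π) #{x ∈ minSites π | ↑s ≤ x} :=
    (card_tailSites_insertMin_le ht).trans <| le_min (Finset.card_filter_le _ _)
      (Finset.card_le_card (Finset.filter_subset_filter _ hπ.tailSites_subset_minSites))
  rw [siteWeight]
  gcongr
  · norm_num
  · norm_num
  · exact card_innerSites_insertMin_le hσ

open Classical in
lemma TopIncreasing.sum_siteWeight_insertMin_le (hπ : TopIncreasing t π) (ht : t ≤ n) :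
    ∑ s : Fin (n + 1) with TopIncreasing t (insertMin s π), siteWeight t (insertMin s π) ≤
      5 * siteWeight t π := by
  let bound : ℕ → ℕ → ℝ := fun r c => 5 ^ min #(tailSites t π) c * (5 / 3) ^ max r 2
  let F : ℕ → ℝ := fun s => bound #{x ∈ minSites π | x ≤ s} #{x ∈ minSites π | s ≤ x}
  have hcard : #(minSites π) = #(innerSites t π) + #(tailSites t π) :=
    (Finset.card_sdiff_add_card_eq_card hπ.tailSites_subset_minSites).symm
  have hsites : ∀ s : Fin (n + 1), TopIncreasing t (insertMin s π) → ↑s ∈ minSites π :=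
    fun s hs => mem_minSites.2 ⟨s.2, hs.avoidsD.minSite⟩
  calc ∑ s : Fin (n + 1) with TopIncreasing t (insertMin s π), siteWeight t (insertMin s π)
      ≤ ∑ s : Fin (n + 1) with TopIncreasing t (insertMin s π), F s :=
        Finset.sum_le_sum fun s hs => siteWeight_insertMin_le hπ (Finset.mem_filter.1 hs).2 ht
    _ ≤ ∑ s : Fin (n + 1) with ↑s ∈ minSites π, F s :=
        Finset.sum_le_sum_of_subset_of_nonneg (Finset.monotone_filter_right _ fun s _ => hsites s)
          fun s _ _ => by positivity
    _ = ∑ s ∈ minSites π, F s := by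
        rw [Finset.sum_filter,
          Fin.sum_univ_eq_sum_range fun s => if s ∈ minSites π then F s else 0,
          ← Finset.sum_filter, Finset.filter_mem_eq_inter, Finset.inter_eq_right.2]
        exact fun u hu => Finset.mem_range.2 (mem_minSites.1 hu).1
    _ = ∑ i ∈ Finset.range #(minSites π), bound (i + 1) (#(minSites π) - i) :=
        sum_card_filter_le_card_filter_ge bound _
    _ ≤ 5 * siteWeight t π := by
        rw [hcard]
        exact sum_pow_min_mul_pow_max_le _ _

lemma TopIncreasing.eq_one {σ : Equiv.Perm (Fin n)} (hσ : TopIncreasing n σ) : σ = 1 := by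
  have hmono : StrictMono σ := fun i j hij =>
    hσ.strictMonoOn (mem_topPositions.2 (by omega)) (mem_topPositions.2 (by omega)) hij
  exact DFunLike.coe_injective ((hmono.range_inj strictMono_id).1 (by simp))

lemma siteWeight_self : siteWeight n π = 5 ^ (n + 1) := by
  have htail : tailSites n π = Finset.range (n + 1) := by
    ext u
    simp [mem_tailSites, mem_topPositions]
  have hinner : innerSites n π = ∅ := by
    rw [innerSites, htail, Finset.sdiff_eq_empty_iff_subset]
    exact fun u hu => Finset.mem_range.2 (mem_minSites.1 hu).1
  simp [siteWeight, htail, hinner]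

open Classical in
lemma sum_siteWeight_le (ht : t ≤ n) :
    ∑ σ : Equiv.Perm (Fin n) with TopIncreasing t σ, siteWeight t σ ≤ 5 ^ (n + 1) := by
  induction n, ht using Nat.le_induction with
  | base =>
    calc ∑ σ : Equiv.Perm (Fin t) with TopIncreasing t σ, siteWeight t σ
        ≤ ∑ σ ∈ {1}, siteWeight t σ :=
          Finset.sum_le_sum_of_subset_of_nonneg (fun σ hσ => by simpa using
            (Finset.mem_filter.1 hσ).2.eq_one) fun σ _ _ => zero_le_one.trans one_le_siteWeight
      _ = 5 ^ (t + 1) := by rw [Finset.sum_singleton, siteWeight_self]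
  | succ n ht ih =>
    calc ∑ σ : Equiv.Perm (Fin (n + 1)) with TopIncreasing t σ, siteWeight t σ
        = ∑ π : Equiv.Perm (Fin n), ∑ s : Fin (n + 1) with TopIncreasing t (insertMin s π),
            siteWeight t (insertMin s π) := by
          simp_rw [Finset.sum_filter]
          exact (sum_insertMin fun σ => if TopIncreasing t σ then siteWeight t σ else 0).symm
      _ = ∑ π : Equiv.Perm (Fin n) with TopIncreasing t π,
            ∑ s : Fin (n + 1) with TopIncreasing t (insertMin s π),
              siteWeight t (insertMin s π) := by
          refine (Finset.sum_filter_of_ne fun π _ hne => ?_).symm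
          obtain ⟨s, hs, -⟩ := Finset.exists_ne_zero_of_sum_ne_zero hne
          exact (Finset.mem_filter.1 hs).2.of_insertMin ht
      _ ≤ ∑ π : Equiv.Perm (Fin n) with TopIncreasing t π, 5 * siteWeight t π :=
          Finset.sum_le_sum fun π hπ =>
            (Finset.mem_filter.1 hπ).2.sum_siteWeight_insertMin_le ht
      _ ≤ 5 * 5 ^ (n + 1) := by
          rw [← Finset.mul_sum]
          gcongr
      _ = 5 ^ (n + 1 + 1) := by ring

open Classical in
lemma card_topIncreasing_le (ht : t ≤ n) :
    #{σ : Equiv.Perm (Fin n) | TopIncreasing t σ} ≤ 5 ^ (n + 1) := by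
  have hweight : (#{σ : Equiv.Perm (Fin n) | TopIncreasing t σ} : ℝ) ≤
      ∑ σ : Equiv.Perm (Fin n) with TopIncreasing t σ, siteWeight t σ := by
    rw [Finset.cast_card]
    exact Finset.sum_le_sum fun σ _ => one_le_siteWeight
  exact_mod_cast hweight.trans (sum_siteWeight_le ht)

end Weight

open Classical in
lemma dCount_le (n : ℕ) : dCount n ≤ (n + 1) * 5 ^ (n + 1) := by
  rw [dCount, Nat.card_eq_fintype_card, Fintype.card_subtype]
  calc #{σ : Equiv.Perm (Fin n) | AvoidsD σ}
      ≤ #((Finset.range (n + 1)).biUnion fun t =>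
          {σ : Equiv.Perm (Fin n) | TopIncreasing t σ}) := by
        refine Finset.card_le_card fun σ hσ => ?_
        obtain ⟨t, ht, h⟩ := exists_topIncreasing (Finset.mem_filter.1 hσ).2
        exact Finset.mem_biUnion.2 ⟨t, Finset.mem_range.2 (by omega), by simpa using h⟩
    _ ≤ #(Finset.range (n + 1)) * 5 ^ (n + 1) :=
        Finset.card_biUnion_le_card_mul _ _ _ fun t ht =>
          card_topIncreasing_le (Nat.lt_succ_iff.1 (Finset.mem_range.1 ht))
    _ = (n + 1) * 5 ^ (n + 1) := by rw [Finset.card_range]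

/-! ### Counting 213-avoiders from below -/

section SkewSum

variable {a b : ℕ}

/-- The skew sum of `α` and `β`: a copy of `α` above and to the left of a copy of `β`. -/
def skewSum (α : Equiv.Perm (Fin a)) (β : Equiv.Perm (Fin b)) : Equiv.Perm (Fin (a + b)) :=
  finSumFinEquiv.symm.trans ((Equiv.sumCongr α β).trans
    ((Equiv.sumComm _ _).trans (finSumFinEquiv.trans (finCongr (add_comm b a)))))

@[simp]
lemma val_skewSum_castAdd (α : Equiv.Perm (Fin a)) (β : Equiv.Perm (Fin b)) (i : Fin a) :
    (skewSum α β (Fin.castAdd b i) : ℕ) = b + α i := by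
  simp [skewSum, add_comm]

@[simp]
lemma val_skewSum_natAdd (α : Equiv.Perm (Fin a)) (β : Equiv.Perm (Fin b)) (j : Fin b) :
    (skewSum α β (Fin.natAdd a j) : ℕ) = β j := by
  simp [skewSum]

lemma skewSum_injective :
    Function.Injective fun p : Equiv.Perm (Fin a) × Equiv.Perm (Fin b) => skewSum p.1 p.2 := by
  rintro ⟨α, β⟩ ⟨α', β'⟩ (h : skewSum α β = skewSum α' β')
  refine Prod.ext (Equiv.ext fun i => Fin.ext ?_) (Equiv.ext fun j => Fin.ext ?_)
  · simpa using congrArg Fin.val (DFunLike.congr_fun h (Fin.castAdd b i))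
  · simpa using congrArg Fin.val (DFunLike.congr_fun h (Fin.natAdd a j))

lemma skewSum_lt_skewSum (α : Equiv.Perm (Fin a)) (β : Equiv.Perm (Fin b)) {i j : Fin (a + b)}
    (hi : i < a) (hj : a ≤ j) : skewSum α β j < skewSum α β i := by
  rw [Fin.lt_def]
  induction i using Fin.addCases with
  | right i => simp at hi
  | left i =>
    induction j using Fin.addCases with
    | left j => exact absurd hj (by simp)
    | right j =>
      rw [val_skewSum_castAdd, val_skewSum_natAdd]
      omega

lemma PatternAvoids.skewSum_p213 {α : Equiv.Perm (Fin a)} {β : Equiv.Perm (Fin b)}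
    (hα : PatternAvoids α p213) (hβ : PatternAvoids β p213) :
    PatternAvoids (skewSum α β) p213 := by
  rw [PatternAvoids, patternContains_p213] at *
  rintro ⟨i, j, k, hij, hjk, hji, hik⟩
  rw [Fin.lt_def] at hij hjk hji hik
  induction i using Fin.addCases <;> induction j using Fin.addCases <;>
    induction k using Fin.addCases <;>
    simp only [Fin.val_castAdd, Fin.val_natAdd, val_skewSum_castAdd, val_skewSum_natAdd,
      Nat.add_lt_add_iff_left, Fin.val_fin_lt] at hij hjk hji hik <;> try omega
  case left.left.left => exact hα ⟨_, _, _, hij, hjk, hji, hik⟩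
  case right.right.right => exact hβ ⟨_, _, _, hij, hjk, hji, hik⟩

end SkewSum

open Classical in
lemma card_patternAvoids_p213_mul_le (a b : ℕ) :
    #{α : Equiv.Perm (Fin a) | PatternAvoids α p213} *
        #{β : Equiv.Perm (Fin b) | PatternAvoids β p213} ≤
      #{π : Equiv.Perm (Fin (a + b)) | PatternAvoids (insertMin ⟨a, by omega⟩ π) p213} := by
  rw [← Finset.card_product]
  refine Finset.card_le_card_of_injOn _ (fun p hp => ?_) skewSum_injective.injOn
  obtain ⟨hα, hβ⟩ := Finset.mem_product.1 hp
  have h := (Finset.mem_filter.1 hα).2.skewSum_p213 (Finset.mem_filter.1 hβ).2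
  simpa using h.insertMin_p213 fun i j => skewSum_lt_skewSum p.1 p.2

open Classical in
lemma catalan_le_card_patternAvoids_p213 (n : ℕ) :
    catalan n ≤ #{σ : Equiv.Perm (Fin n) | PatternAvoids σ p213} := by
  induction n using Nat.strong_induction_on with
  | h n ih =>
  cases n with
  | zero =>
    rw [catalan_zero, Nat.one_le_iff_ne_zero, Finset.card_ne_zero]
    exact ⟨1, by simp [PatternAvoids, patternContains_p213]⟩
  | succ n =>
    calc catalan (n + 1) = ∑ s : Fin (n + 1), catalan s * catalan (n - s) := catalan_succ n
      _ ≤ ∑ s : Fin (n + 1),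
            #{π : Equiv.Perm (Fin n) | PatternAvoids (insertMin s π) p213} := by
          refine Finset.sum_le_sum fun ⟨a, ha⟩ _ => ?_
          obtain ⟨b, rfl⟩ := Nat.exists_eq_add_of_le (Nat.lt_succ_iff.1 ha)
          rw [Nat.add_sub_cancel_left]
          exact (Nat.mul_le_mul (ih a ha) (ih b (by omega))).trans
            (card_patternAvoids_p213_mul_le a b)
      _ = #{σ : Equiv.Perm (Fin (n + 1)) | PatternAvoids σ p213} := by
          simp_rw [Finset.card_filter]
          rw [Finset.sum_comm]
          exact sum_insertMin fun σ => if PatternAvoids σ p213 then 1 else 0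

/-! ### Placing an increasing sequence above a 213-avoider -/

lemma HGridding.avoidsH {n k : ℕ} {σ : Equiv.Perm (Fin n)} (hσ : HGridding σ k) :
    AvoidsH σ := by
  obtain ⟨-, htop, hbot⟩ := hσ
  have hno213 : ∀ x y z w : Fin n, x < y → y < z → w < z → σ y < σ x → σ x < σ z → ¬ σ z < σ w := by
    intro x y z w hxy hyz hwz hyx hxz hzw
    have hzk : (σ z : ℕ) + 1 ≤ k := by
      by_contra! hkz
      exact hzw.not_gt (htop w z hwz (by omega) hkz)
    refine hbot ⟨![x, y, z], ?_, ?_, ?_⟩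
    · simp [Fin.strictMono_iff_lt_succ, Fin.forall_fin_succ, hxy, hyz]
    · simp only [Fin.forall_fin_succ]
      simp
      omega
    · simp [p213, Fin.forall_fin_succ]
      omega
  refine ⟨fun h => ?_, fun h => ?_, fun h => ?_⟩
  · obtain ⟨w, x, y, z, hwx, hxy, hyz, hyx, hxz, hzw⟩ := patternContains_p4213.1 h
    exact hno213 x y z w hxy hyz (by omega) hyx hxz hzw
  · obtain ⟨x, w, y, z, hxw, hwy, hyz, hyx, hxz, hzw⟩ := patternContains_p2413.1 h
    exact hno213 x y z w (by omega) hyz (by omega) hyx hxz hzw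
  · obtain ⟨x, y, w, z, hxy, hyw, hwz, hyx, hxz, hzw⟩ := patternContains_p2143.1 h
    exact hno213 x y z w hxy (by omega) hwz hyx hxz hzw

section PlaceBelow

lemma card_compl_eq_sub {n k : ℕ} {S : Finset (Fin n)} (hS : #S = k) : #Sᶜ = n - k := by
  rw [Finset.card_compl, Fintype.card_fin, hS]

variable {n k : ℕ} {S : Finset (Fin n)} (hS : #S = k) (π : Equiv.Perm (Fin k))

/-- The permutation with the pattern `π` on the positions in `S` and, above it, an increasing
sequence on the remaining positions. -/
def placeBelow : Equiv.Perm (Fin n) :=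
  (finSumEquivOfFinset hS (card_compl_eq_sub hS)).symm.trans
    ((Equiv.sumCongr π (Equiv.refl (Fin (n - k)))).trans (finSumFinEquiv.trans
      (finCongr (Nat.add_sub_of_le (hS ▸ card_finset_fin_le S)))))

@[simp]
lemma val_placeBelow_orderEmbOfFin (i : Fin k) :
    (placeBelow hS π (S.orderEmbOfFin hS i) : ℕ) = π i := by
  rw [← finSumEquivOfFinset_inl hS (card_compl_eq_sub hS)]
  simp [placeBelow, -finSumEquivOfFinset_inl]

lemma val_placeBelow_orderEmbOfFin_compl (hc : #Sᶜ = n - k) (i : Fin (n - k)) :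
    (placeBelow hS π (Sᶜ.orderEmbOfFin hc i) : ℕ) = k + i := by
  rw [← finSumEquivOfFinset_inr hS hc]
  simp [placeBelow, -finSumEquivOfFinset_inr]

lemma exists_orderEmbOfFin_eq {i : Fin n} (hi : i ∈ S) : ∃ x, S.orderEmbOfFin hS x = i := by
  rwa [← Set.mem_range, Finset.range_orderEmbOfFin]

lemma val_placeBelow_lt_iff {i : Fin n} : placeBelow hS π i < k ↔ i ∈ S := by
  by_cases hi : i ∈ S
  · obtain ⟨x, rfl⟩ := exists_orderEmbOfFin_eq hS hi
    simp
  · have hc : #Sᶜ = n - k := by rw [Finset.card_compl, Fintype.card_fin, hS]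
    obtain ⟨x, rfl⟩ := exists_orderEmbOfFin_eq hc (Finset.mem_compl.2 hi)
    simp [val_placeBelow_orderEmbOfFin_compl, hi]

lemma strictMonoOn_placeBelow_compl : StrictMonoOn (placeBelow hS π) Sᶜ := by
  intro i hi j hj hij
  have hc := card_compl_eq_sub hS
  obtain ⟨x, rfl⟩ := exists_orderEmbOfFin_eq hc (Finset.mem_compl.2 hi)
  obtain ⟨y, rfl⟩ := exists_orderEmbOfFin_eq hc (Finset.mem_compl.2 hj)
  rw [OrderEmbedding.lt_iff_lt] at hij
  rw [Fin.lt_def, val_placeBelow_orderEmbOfFin_compl, val_placeBelow_orderEmbOfFin_compl]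
  omega

variable {π}

lemma hGridding_placeBelow (hπ : PatternAvoids π p213) : HGridding (placeBelow hS π) k := by
  refine ⟨hS ▸ card_finset_fin_le S, fun i j hij hi hj => ?_, ?_⟩
  · refine strictMonoOn_placeBelow_compl hS π (fun hiS => ?_) (fun hjS => ?_) hij
    · have := (val_placeBelow_lt_iff hS π).2 hiS
      omega
    · have := (val_placeBelow_lt_iff hS π).2 hjS
      omega
  · rintro ⟨f, hf, hfk, hpat⟩
    have hfS : ∀ a, f a ∈ S := fun a => (val_placeBelow_lt_iff hS π).1 (hfk a)
    choose g hg using fun a => exists_orderEmbOfFin_eq hS (hfS a)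
    refine hπ ⟨g, fun a b hab => ?_, fun a b => ?_⟩
    · rw [← (S.orderEmbOfFin hS).lt_iff_lt, hg, hg]
      exact hf hab
    · rw [hpat, ← hg, ← hg, Fin.lt_def, val_placeBelow_orderEmbOfFin,
        val_placeBelow_orderEmbOfFin, Fin.lt_def]

end PlaceBelow

lemma placeBelow_injective (n k : ℕ) :
    Function.Injective fun p : {S : Finset (Fin n) // #S = k} × Equiv.Perm (Fin k) =>
      placeBelow p.1.2 p.2 := by
  rintro ⟨⟨S, hS⟩, π⟩ ⟨⟨S', hS'⟩, π'⟩ (h : placeBelow hS π = placeBelow hS' π')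
  obtain rfl : S = S' := Finset.ext fun i => by
    rw [← val_placeBelow_lt_iff hS π, h, val_placeBelow_lt_iff hS' π']
  obtain rfl : π = π' := Equiv.ext fun i => Fin.ext <| by
    rw [← val_placeBelow_orderEmbOfFin hS π, h, val_placeBelow_orderEmbOfFin]
  rfl

open Classical in
lemma choose_mul_catalan_le_hCount (n k : ℕ) : n.choose k * catalan k ≤ hCount n := by
  let place : {S : Finset (Fin n) // #S = k} × {π : Equiv.Perm (Fin k) // PatternAvoids π p213} →
      {σ : Equiv.Perm (Fin n) // AvoidsH σ} :=
    fun p => ⟨placeBelow p.1.2 p.2, (hGridding_placeBelow p.1.2 p.2.2).avoidsH⟩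
  have hplace : Function.Injective place := .of_comp (f := Subtype.val) <|
    (placeBelow_injective n k).comp <| Function.injective_id.prodMap Subtype.val_injective
  calc n.choose k * catalan k
      ≤ Fintype.card ({S : Finset (Fin n) // #S = k} ×
          {π : Equiv.Perm (Fin k) // PatternAvoids π p213}) := by
        rw [Fintype.card_prod, Fintype.card_finset_len, Fintype.card_fin, Fintype.card_subtype]
        exact Nat.mul_le_mul_left _ (catalan_le_card_patternAvoids_p213 k)
    _ ≤ hCount n := by
        rw [hCount, Nat.card_eq_fintype_card]
        exact Fintype.card_le_of_injective place hplace

lemma four_pow_le_mul_catalan (k : ℕ) : 4 ^ k ≤ 2 * (k + 1) ^ 2 * catalan k :=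
  calc 4 ^ k ≤ (2 * k + 1) * k.centralBinom := Nat.four_pow_le_two_mul_add_one_mul_central_binom k
    _ ≤ 2 * (k + 1) * ((k + 1) * catalan k) := by
        rw [succ_mul_catalan_eq_centralBinom]
        gcongr
        omega
    _ = 2 * (k + 1) ^ 2 * catalan k := by ring

lemma five_pow_le_mul_hCount (n : ℕ) : 5 ^ n ≤ 2 * (n + 1) ^ 3 * hCount n :=
  calc 5 ^ n = ∑ k ∈ Finset.range (n + 1), 4 ^ k * n.choose k := by
        simpa using add_pow (4 : ℕ) 1 n
    _ ≤ ∑ k ∈ Finset.range (n + 1), 2 * (n + 1) ^ 2 * hCount n := by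
        refine Finset.sum_le_sum fun k hk => ?_
        calc 4 ^ k * n.choose k ≤ 2 * (k + 1) ^ 2 * catalan k * n.choose k := by
              gcongr
              exact four_pow_le_mul_catalan k
          _ = 2 * (k + 1) ^ 2 * (n.choose k * catalan k) := by ring
          _ ≤ 2 * (n + 1) ^ 2 * hCount n := by
              gcongr
              · exact Nat.lt_succ_iff.1 (Finset.mem_range.1 hk)
              · exact choose_mul_catalan_le_hCount n k
    _ = 2 * (n + 1) ^ 3 * hCount n := by
        rw [Finset.sum_const, Finset.card_range, smul_eq_mul]
        ring

/-! ### Growth rates -/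

lemma hCount_le_dCount (n : ℕ) : hCount n ≤ dCount n := by
  classical
  rw [hCount, dCount, Nat.card_eq_fintype_card, Nat.card_eq_fintype_card]
  exact Fintype.card_subtype_mono _ _ fun σ h => ⟨h.1, h.2.2⟩

lemma tendsto_const_mul_pow_rpow_one_div {C : ℝ} (hC : 0 < C) (p : ℕ) :
    Tendsto (fun n : ℕ => (C * (n + 1 : ℝ) ^ p) ^ (1 / (n : ℝ))) atTop (𝓝 1) := by
  have hconst : Tendsto (fun n : ℕ => C ^ (1 / (n : ℝ))) atTop (𝓝 1) := by
    simpa [Function.comp_def] using ((Real.continuous_const_rpow hC.ne').tendsto 0).comp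
      (tendsto_one_div_atTop_nhds_zero_nat (𝕜 := ℝ))
  have hlinear : Tendsto (fun n : ℕ => (n + 1 : ℝ) ^ (1 / (n : ℝ))) atTop (𝓝 1) :=
    ((tendsto_rpow_div_mul_add 1 1 (-1) zero_ne_one).comp
      (tendsto_atTop_add_const_right atTop (1 : ℝ) tendsto_natCast_atTop_atTop)).congr
      fun n => by simp
  have hmul := hconst.mul (hlinear.pow p)
  rw [one_pow, mul_one] at hmul
  refine hmul.congr fun n => ?_
  rw [Real.mul_rpow hC.le (by positivity), Real.rpow_pow_comm (by positivity)]

lemma tendsto_rpow_one_div_of_le_mul_pow {a P : ℕ → ℝ} {c : ℝ} (hc : 0 < c)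
    (ha : ∀ n, 0 ≤ a n) (hP : ∀ n, 0 ≤ P n)
    (hP_tendsto : Tendsto (fun n : ℕ => P n ^ (1 / (n : ℝ))) atTop (𝓝 1))
    (hlower : ∀ n, c ^ n ≤ P n * a n) (hupper : ∀ n, a n ≤ P n * c ^ n) :
    Tendsto (fun n : ℕ => a n ^ (1 / (n : ℝ))) atTop (𝓝 c) := by
  have hroot : ∀ n : ℕ, n ≠ 0 → (c ^ n) ^ (1 / (n : ℝ)) = c := fun n hn => by
    rw [one_div, Real.pow_rpow_inv_natCast hc.le hn]
  have hleft : Tendsto (fun n : ℕ => c / P n ^ (1 / (n : ℝ))) atTop (𝓝 c) := by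
    simpa [Pi.div_def] using (tendsto_const_nhds (x := c)).div hP_tendsto one_ne_zero
  have hright : Tendsto (fun n : ℕ => P n ^ (1 / (n : ℝ)) * c) atTop (𝓝 c) := by
    simpa using hP_tendsto.mul_const c
  refine tendsto_of_tendsto_of_tendsto_of_le_of_le' hleft hright ?_ ?_
  · filter_upwards [eventually_ne_atTop 0] with n hn
    refine div_le_of_le_mul₀ (Real.rpow_nonneg (hP n) _) (Real.rpow_nonneg (ha n) _) ?_
    calc c = (c ^ n) ^ (1 / (n : ℝ)) := (hroot n hn).symm
      _ ≤ (P n * a n) ^ (1 / (n : ℝ)) :=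
          Real.rpow_le_rpow (by positivity) (hlower n) (by positivity)
      _ = a n ^ (1 / (n : ℝ)) * P n ^ (1 / (n : ℝ)) := by
          rw [Real.mul_rpow (hP n) (ha n), mul_comm]
  · filter_upwards [eventually_ne_atTop 0] with n hn
    calc a n ^ (1 / (n : ℝ)) ≤ (P n * c ^ n) ^ (1 / (n : ℝ)) :=
          Real.rpow_le_rpow (ha n) (hupper n) (by positivity)
      _ = P n ^ (1 / (n : ℝ)) * c := by rw [Real.mul_rpow (hP n) (by positivity), hroot n hn]

theorem growth_rates :
    Tendsto (fun n : ℕ => (hCount n : ℝ) ^ (1 / (n : ℝ))) atTop (nhds 5) ∧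
    Tendsto (fun n : ℕ => (dCount n : ℝ) ^ (1 / (n : ℝ))) atTop (nhds 5) := by
  have hlower : ∀ n, (5 : ℝ) ^ n ≤ 5 * (n + 1) ^ 3 * hCount n := fun n => by
    have h : 5 ^ n ≤ 5 * (n + 1) ^ 3 * hCount n :=
      (five_pow_le_mul_hCount n).trans (by gcongr; omega)
    exact_mod_cast h
  have hupper : ∀ n, (dCount n : ℝ) ≤ 5 * (n + 1) ^ 3 * 5 ^ n := fun n => by
    have h : dCount n ≤ 5 * (n + 1) ^ 3 * 5 ^ n :=
      calc dCount n ≤ (n + 1) * 5 ^ (n + 1) := dCount_le n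
        _ ≤ (n + 1) ^ 3 * 5 ^ (n + 1) := by gcongr; exact Nat.le_self_pow three_ne_zero _
        _ = 5 * (n + 1) ^ 3 * 5 ^ n := by ring
    exact_mod_cast h
  have hle : ∀ n, (hCount n : ℝ) ≤ dCount n := fun n => Nat.cast_le.2 (hCount_le_dCount n)
  have hpoly := tendsto_const_mul_pow_rpow_one_div (C := 5) (by norm_num) 3
  have hpos : ∀ n : ℕ, (0 : ℝ) ≤ 5 * (n + 1) ^ 3 := fun n => by positivity
  exact ⟨tendsto_rpow_one_div_of_le_mul_pow (by norm_num) (fun n => Nat.cast_nonneg _) hpos hpoly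
      hlower fun n => (hle n).trans (hupper n),
    tendsto_rpow_one_div_of_le_mul_pow (by norm_num) (fun n => Nat.cast_nonneg _) hpos hpoly
      (fun n => (hlower n).trans (mul_le_mul_of_nonneg_left (hle n) (hpos n))) hupper⟩
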